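/- The second Laurent coefficient of B(z,1/2) at z = 0 satisfies b_2 = (1/2)·f″(0) = 2·ζ(3) + (4/3)·(log 2)³ − (π²/3)·log 2, where ζ is the Riemann zeta function. -/

import Mathlib

/-- Euler beta function B(z, 1/2). -/
noncomputable def betaHalf (z : ℝ) : ℝ :=
  Real.Gamma z * Real.Gamma (1 / 2) / Real.Gamma (z + 1 / 2)

/-- B(z,1/2) minus its pole 1/z, extended by its limit 2 log 2 at z = 0. -/
noncomputable def f (z : ℝ) : ℝ :=
  if z = 0 then 2 * Real.log 2 else betaHalf z - 1 / z

/-- The Laurent coefficients of B(z,1/2) at z = 0 (for nonnegative indices). -/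
noncomputable def b (n : ℕ) : ℝ := (1 / (n.factorial : ℝ)) * iteratedDeriv n f 0

open Real Set Filter Topology

namespace BetaAux

noncomputable def lg (j : ℕ) (z : ℝ) : ℝ :=
  log ((j + 1 : ℝ) + 2 * z) + log (j + 1 : ℝ) - 2 * log ((j + 1 : ℝ) + z)

noncomputable def tt (j : ℕ) (z : ℝ) : ℝ := ((j + 1 : ℝ) + 2 * z)⁻¹ * ((j + 1 : ℝ) + z)⁻¹

noncomputable def td (j : ℕ) (z : ℝ) : ℝ :=
  -2 * (((j + 1 : ℝ) + 2 * z)⁻¹ ^ 2 * ((j + 1 : ℝ) + z)⁻¹)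
    - ((j + 1 : ℝ) + 2 * z)⁻¹ * ((j + 1 : ℝ) + z)⁻¹ ^ 2

abbrev I4 : Set ℝ := Ioo (-(1 / 4)) (1 / 4)

lemma pos1 (j : ℕ) {z : ℝ} (hz : z ∈ I4) : 0 < (j + 1 : ℝ) + 2 * z := by
  have : (0 : ℝ) ≤ j := j.cast_nonneg
  have := hz.1
  linarith

lemma pos2 (j : ℕ) {z : ℝ} (hz : z ∈ I4) : 0 < (j + 1 : ℝ) + z := by
  have : (0 : ℝ) ≤ j := j.cast_nonneg
  have := hz.1
  linarith

lemma bd1 (j : ℕ) {z : ℝ} (hz : z ∈ I4) : ((j + 1 : ℝ) + 2 * z)⁻¹ ≤ 2 * (j + 1 : ℝ)⁻¹ := by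
  have h0 : (0 : ℝ) ≤ j := j.cast_nonneg
  have := hz.1
  rw [inv_le_iff_one_le_mul₀ (pos1 j hz)]
  field_simp
  linarith

lemma bd2 (j : ℕ) {z : ℝ} (hz : z ∈ I4) : ((j + 1 : ℝ) + z)⁻¹ ≤ 2 * (j + 1 : ℝ)⁻¹ := by
  have h0 : (0 : ℝ) ≤ j := j.cast_nonneg
  have := hz.1
  rw [inv_le_iff_one_le_mul₀ (pos2 j hz)]
  field_simp
  linarith

lemma summ2 : Summable (fun j : ℕ => 24 * ((j + 1 : ℝ)⁻¹) ^ 2) := by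
  apply Summable.mul_left
  have := (summable_nat_add_iff 1).2 (Real.summable_nat_pow_inv.2 (by norm_num : 1 < 2))
  simpa using this

lemma tt_bd (j : ℕ) {z : ℝ} (hz : z ∈ I4) : |tt j z| ≤ 4 * ((j + 1 : ℝ)⁻¹) ^ 2 := by
  have p1 := inv_pos.2 (pos1 j hz)
  have p2 := inv_pos.2 (pos2 j hz)
  rw [tt, abs_of_pos (mul_pos p1 p2)]
  have := mul_le_mul (bd1 j hz) (bd2 j hz) p2.le (by positivity)
  linarith

lemma td_bd (j : ℕ) {z : ℝ} (hz : z ∈ I4) : |td j z| ≤ 24 * ((j + 1 : ℝ)⁻¹) ^ 2 := by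
  have p1 := inv_pos.2 (pos1 j hz)
  have p2 := inv_pos.2 (pos2 j hz)
  have b1 := bd1 j hz
  have b2 := bd2 j hz
  have c1 : (j + 1 : ℝ)⁻¹ ≤ 1 := inv_le_one_of_one_le₀ (by linarith [(j.cast_nonneg : (0 : ℝ) ≤ j)])
  have e := tt_bd j hz
  rw [tt, abs_of_pos (mul_pos p1 p2)] at e
  rw [td]
  generalize ((j + 1 : ℝ) + 2 * z)⁻¹ = A at *
  generalize ((j + 1 : ℝ) + z)⁻¹ = B at *
  generalize (j + 1 : ℝ)⁻¹ = c at *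
  have : -2 * (A ^ 2 * B) - A * B ^ 2 = -((A * B) * (2 * A + B)) := by ring
  rw [this, abs_neg, abs_of_pos (by positivity)]
  have := mul_le_mul e (show 2 * A + B ≤ 6 by linarith) (by positivity) (by positivity)
  linarith

lemma lg_deriv (j : ℕ) {z : ℝ} (hz : z ∈ I4) : HasDerivAt (lg j) (-2 * z * tt j z) z := by
  have p1 := (pos1 j hz)
  have p2 := (pos2 j hz)
  have h1 : HasDerivAt (fun z : ℝ => (j + 1 : ℝ) + 2 * z) 2 z := by
    simpa using ((hasDerivAt_id z).const_mul 2).const_add (j + 1 : ℝ)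
  have h2 : HasDerivAt (fun z : ℝ => (j + 1 : ℝ) + z) 1 z := by
    simpa using (hasDerivAt_id z).const_add (j + 1 : ℝ)
  have := ((h1.log p1.ne').add_const (log (j + 1 : ℝ))).sub ((h2.log p2.ne').const_mul 2)
  convert! this using 1
  rw [tt]
  field_simp
  ring

lemma tt_deriv (j : ℕ) {z : ℝ} (hz : z ∈ I4) : HasDerivAt (tt j) (td j z) z := by
  have p1 := (pos1 j hz)
  have p2 := (pos2 j hz)
  have h1 : HasDerivAt (fun z : ℝ => (j + 1 : ℝ) + 2 * z) 2 z := by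
    simpa using ((hasDerivAt_id z).const_mul 2).const_add (j + 1 : ℝ)
  have h2 : HasDerivAt (fun z : ℝ => (j + 1 : ℝ) + z) 1 z := by
    simpa using (hasDerivAt_id z).const_add (j + 1 : ℝ)
  have := (h1.fun_inv p1.ne').mul (h2.fun_inv p2.ne')
  convert! this using 1
  rw [td]
  field_simp
  ring

noncomputable def L (z : ℝ) : ℝ := ∑' j, lg j z
noncomputable def T (z : ℝ) : ℝ := ∑' j, tt j z
noncomputable def Td (z : ℝ) : ℝ := ∑' j, td j z

lemma zero_mem : (0 : ℝ) ∈ I4 := by constructor <;> norm_num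

lemma lgd_bd (j : ℕ) {z : ℝ} (hz : z ∈ I4) : ‖-2 * z * tt j z‖ ≤ 24 * ((j + 1 : ℝ)⁻¹) ^ 2 := by
  have e := tt_bd j hz
  rw [norm_eq_abs, abs_mul]
  have : |-2 * z| ≤ 1 := by
    rw [abs_le]; constructor <;> linarith [hz.1, hz.2]
  have := mul_le_mul this e (abs_nonneg _) zero_le_one
  have : 0 ≤ ((j + 1 : ℝ)⁻¹) ^ 2 := by positivity
  linarith

lemma lg_zero : Summable (fun j => lg j 0) := by
  have : (fun j => lg j 0) = fun _ => 0 := by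
    ext j; simp [lg]; ring
  rw [this]; exact summable_zero

lemma lg_summable {z : ℝ} (hz : z ∈ I4) : Summable (fun j => lg j z) :=
  summable_of_summable_hasDerivAt_of_isPreconnected summ2 isOpen_Ioo isPreconnected_Ioo
    (fun j _ h => lg_deriv j h) (fun j _ h => lgd_bd j h) zero_mem lg_zero hz

lemma tt_summable {z : ℝ} (hz : z ∈ I4) : Summable (fun j => tt j z) := by
  refine Summable.of_norm_bounded summ2 fun j => ?_
  have := tt_bd j hz
  have : 0 ≤ ((j + 1 : ℝ)⁻¹) ^ 2 := by positivity
  rw [norm_eq_abs]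
  linarith

lemma L_deriv {z : ℝ} (hz : z ∈ I4) : HasDerivAt L (-2 * z * T z) z := by
  have := hasDerivAt_tsum_of_isPreconnected summ2 isOpen_Ioo isPreconnected_Ioo
    (fun j _ h => lg_deriv j h) (fun j _ h => lgd_bd j h) zero_mem lg_zero hz
  rw [tsum_mul_left] at this
  exact this

lemma T_deriv {z : ℝ} (hz : z ∈ I4) : HasDerivAt T (Td z) z :=
  hasDerivAt_tsum_of_isPreconnected summ2 isOpen_Ioo isPreconnected_Ioo
    (fun j _ h => tt_deriv j h) (fun j _ h => td_bd j h) zero_mem (tt_summable zero_mem) hz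

lemma Td_cont : ContinuousAt Td 0 := by
  have : ContinuousOn Td I4 := by
    refine continuousOn_tsum (fun j => ?_) summ2 (fun j _ h => td_bd j h)
    intro z hz
    have p1 := (pos1 j hz).ne'
    have p2 := (pos2 j hz).ne'
    apply ContinuousAt.continuousWithinAt
    unfold td
    fun_prop (disch := assumption)
  exact this.continuousAt (isOpen_Ioo.mem_nhds zero_mem)

lemma T_zero : T 0 = π ^ 2 / 6 := by
  have h := hasSum_zeta_two
  have h2 := h.summable.tsum_eq_zero_add
  rw [h.tsum_eq] at h2
  rw [h2, T]
  simp only [tt]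
  simp
  congr 1
  ext j
  have : (0 : ℝ) < j + 1 := by positivity
  field_simp

lemma Td_zero : Td 0 = -3 * (riemannZeta 3).re := by
  have h := zeta_nat_eq_tsum_of_gt_one (k := 3) (by norm_num)
  have h1 : riemannZeta 3 = ((∑' n : ℕ, 1 / (n : ℝ) ^ 3 : ℝ) : ℂ) := by
    push_cast
    exact_mod_cast h
  have hs : Summable (fun n : ℕ => 1 / (n : ℝ) ^ 3) :=
    Real.summable_one_div_nat_pow.2 (by norm_num)
  rw [h1, Complex.ofReal_re, hs.tsum_eq_zero_add, Td]
  simp only [td]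
  simp
  rw [← tsum_mul_left, ← tsum_neg]
  congr 1
  ext j
  have : (0 : ℝ) < j + 1 := by positivity
  field_simp
  ring

noncomputable def h (z : ℝ) : ℝ := Gamma (z + 1) * Gamma (1 / 2) / Gamma (z + 1 / 2)

lemma gamma_ratio {z : ℝ} (hz : z ∈ I4) :
    Gamma (1 + z) ^ 2 / Gamma (1 + 2 * z) = exp (L z) := by
  have g1 := GammaSeq_tendsto_Gamma (1 + z)
  have g2 := GammaSeq_tendsto_Gamma (1 + 2 * z)
  have hp : 0 < Gamma (1 + 2 * z) := Gamma_pos_of_pos (by linarith [hz.1])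
  have g3 := (g1.pow 2).div g2 hp.ne'
  have s1 : Tendsto (fun n : ℕ => ∑ j ∈ Finset.range (n + 1), lg j z) atTop (𝓝 (L z)) :=
    (tendsto_add_atTop_iff_nat 1).2 (lg_summable hz).hasSum.tendsto_sum_nat
  have s2 := ((continuous_exp.tendsto _).comp s1)
  have s3 : Tendsto (fun n : ℕ => (n : ℝ) / (n + 1)) atTop (𝓝 1) := by
    exact_mod_cast tendsto_natCast_div_add_atTop (1 : ℝ)
  have s4 := s3.mul s2
  rw [one_mul] at s4
  refine tendsto_nhds_unique g3 (s4.congr' ?_)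
  filter_upwards [eventually_gt_atTop 0] with n hn
  have hn' : (0 : ℝ) < n := by exact_mod_cast hn
  have e1 : ∀ j : ℕ, exp (lg j z) =
      ((1 + 2 * z) + j) * (j + 1) / ((1 + z) + j) ^ 2 := by
    intro j
    have p1 := (pos1 j hz)
    have p2 := (pos2 j hz)
    have p3 : (0 : ℝ) < j + 1 := by positivity
    rw [lg, exp_sub, exp_add, exp_log p1, exp_log p3, two_mul (log _), exp_add, exp_log p2]
    ring_nf
  have e2 : ∏ j ∈ Finset.range (n + 1), ((j : ℝ) + 1) = (n + 1) * n.factorial := by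
    have := Finset.prod_range_add_one_eq_factorial (n + 1)
    have h2 : ((∏ j ∈ Finset.range (n + 1), (j + 1) : ℕ) : ℝ) = ((n + 1).factorial : ℕ) := by
      rw [this]
    rw [Nat.factorial_succ] at h2
    push_cast at h2
    exact h2
  simp only [Function.comp, Pi.div_apply]
  rw [exp_sum, Finset.prod_congr rfl (fun j _ => e1 j), Finset.prod_div_distrib,
    Finset.prod_mul_distrib, Finset.prod_pow, e2, GammaSeq, GammaSeq]
  have q1 : (∏ j ∈ Finset.range (n + 1), ((1 + z) + (j : ℝ))) ≠ 0 :=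
    Finset.prod_ne_zero_iff.2 fun j _ => by
      have := pos2 j hz; intro h0; linarith
  have q2 : (∏ j ∈ Finset.range (n + 1), ((1 + 2 * z) + (j : ℝ))) ≠ 0 :=
    Finset.prod_ne_zero_iff.2 fun j _ => by
      have := pos1 j hz; intro h0; linarith
  have q3 : (n.factorial : ℝ) ≠ 0 := by positivity
  have r1 : (n : ℝ) ^ (1 + z) = n * (n : ℝ) ^ z := by rw [rpow_add hn', rpow_one]
  have r2 : (n : ℝ) ^ (1 + 2 * z) = n * ((n : ℝ) ^ z) ^ 2 := by
    rw [rpow_add hn', rpow_one, two_mul, rpow_add hn', sq]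
  have r3 : (n : ℝ) ^ z ≠ 0 := (rpow_pos_of_pos hn' z).ne'
  rw [r1, r2]
  generalize (n : ℝ) ^ z = w at *
  generalize (∏ j ∈ Finset.range (n + 1), ((1 + 2 * z) + (j : ℝ))) = P at *
  generalize (∏ j ∈ Finset.range (n + 1), ((1 + z) + (j : ℝ))) = Q at *
  field_simp

lemma h_eq {z : ℝ} (hz : z ∈ I4) : h z = exp (2 * log 2 * z + L z) := by
  have d := Real.Gamma_mul_Gamma_add_half (z + 1 / 2)
  have e : z + 1 / 2 + 1 / 2 = 1 + z := by ring
  have e2 : 2 * (z + 1 / 2) = 1 + 2 * z := by ring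
  have e3 : 1 - (1 + 2 * z) = -(2 * z) := by ring
  rw [e, e2, e3, rpow_neg two_pos.le] at d
  have p1 : 0 < Gamma (1 + 2 * z) := Gamma_pos_of_pos (by linarith [hz.1])
  have p2 : 0 < Gamma (z + 1 / 2) := Gamma_pos_of_pos (by linarith [hz.1])
  have p3 : 0 < (2 : ℝ) ^ (2 * z) := rpow_pos_of_pos two_pos _
  have e4 : exp (2 * log 2 * z) = (2 : ℝ) ^ (2 * z) := by
    rw [rpow_def_of_pos two_pos]; ring_nf
  rw [exp_add, ← gamma_ratio hz, e4, h, Real.Gamma_one_half_eq, add_comm z 1]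
  generalize Gamma (z + 1 / 2) = A at *
  generalize Gamma (1 + 2 * z) = B at *
  generalize (2 : ℝ) ^ (2 * z) = C at *
  generalize Gamma (1 + z) = D at *
  rw [← div_eq_mul_inv, div_mul_eq_mul_div, eq_div_iff p3.ne'] at d
  rw [mul_div_assoc', div_eq_div_iff p2.ne' p1.ne']
  linear_combination (-D) * d

lemma gamma_an {x : ℝ} (hx : 0 < x) : AnalyticAt ℝ Gamma x := by
  have : AnalyticAt ℂ Complex.Gamma (x : ℂ) := by
    have ho : IsOpen {s : ℂ | 0 < s.re} := isOpen_lt continuous_const Complex.continuous_re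
    refine DifferentiableOn.analyticAt (s := {s : ℂ | 0 < s.re}) ?_ (ho.mem_nhds (by simpa using hx))
    intro s hs
    refine (Complex.differentiableAt_Gamma s fun m hm => ?_).differentiableWithinAt
    rw [hm] at hs
    simp at hs
    linarith [(m.cast_nonneg : (0 : ℝ) ≤ m)]
  exact this.re_ofReal

lemma h_an : AnalyticAt ℝ h 0 := by
  have a1 : AnalyticAt ℝ (fun z : ℝ => Gamma (z + 1)) 0 :=
    AnalyticAt.fun_comp (gamma_an (by norm_num)) (by fun_prop)
  have a2 : AnalyticAt ℝ (fun z : ℝ => Gamma (z + 1 / 2)) 0 :=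
    AnalyticAt.fun_comp (gamma_an (by norm_num)) (by fun_prop)
  exact (a1.mul analyticAt_const).div a2 (Gamma_pos_of_pos (by norm_num)).ne'

noncomputable def u (z : ℝ) : ℝ := 2 * log 2 - 2 * z * T z
noncomputable def u1 (z : ℝ) : ℝ := -2 * T z - 2 * z * Td z

lemma h_deriv {z : ℝ} (hz : z ∈ I4) : HasDerivAt h (h z * u z) z := by
  have h1 : HasDerivAt (fun z => exp (2 * log 2 * z + L z)) (h z * u z) z := by
    have h2 : HasDerivAt (fun z : ℝ => 2 * log 2 * z) (2 * log 2) z := by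
      simpa using (hasDerivAt_id z).const_mul (2 * log 2)
    convert! (h2.add (L_deriv hz)).exp using 1
    rw [h_eq hz, u]
    simp only [Pi.add_apply]
    ring
  refine h1.congr_of_eventuallyEq ?_
  filter_upwards [isOpen_Ioo.mem_nhds hz] with y hy
  exact h_eq hy

lemma u_deriv {z : ℝ} (hz : z ∈ I4) : HasDerivAt u (u1 z) z := by
  have h2 : HasDerivAt (fun z : ℝ => 2 * z) 2 z := by
    simpa using (hasDerivAt_id z).const_mul (2 : ℝ)
  convert! (h2.mul (T_deriv hz)).const_sub (2 * log 2) using 1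
  rw [u1]; ring

lemma u1_deriv : HasDerivAt u1 (-4 * Td 0) 0 := by
  have h1 : HasDerivAt (fun z : ℝ => z * Td z) (Td 0) 0 := by
    rw [hasDerivAt_iff_tendsto_slope]
    refine (Td_cont.tendsto.mono_left nhdsWithin_le_nhds).congr' ?_
    filter_upwards [self_mem_nhdsWithin] with z hz
    have : z ≠ 0 := hz
    simp [slope_def_field]
    field_simp
  convert! ((T_deriv zero_mem).const_mul (-2)).sub (h1.const_mul 2) using 1
  · ext z; simp [u1]; ring
  · ring

lemma h3 : iteratedDeriv 3 h 0 =
    (2 * log 2) ^ 3 - 6 * (2 * log 2) * T 0 - 4 * Td 0 := by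
  have m : I4 ∈ 𝓝 (0 : ℝ) := isOpen_Ioo.mem_nhds zero_mem
  have d1 : ∀ z ∈ I4, deriv h z = h z * u z := fun z hz => (h_deriv hz).deriv
  have d2 : ∀ z ∈ I4, deriv (deriv h) z = h z * u z * u z + h z * u1 z := fun z hz => by
    have : deriv h =ᶠ[𝓝 z] fun z => h z * u z := by
      filter_upwards [isOpen_Ioo.mem_nhds hz] with y hy using d1 y hy
    rw [this.deriv_eq]
    exact ((h_deriv hz).mul (u_deriv hz)).deriv
  have d3 : deriv (deriv h) =ᶠ[𝓝 0] fun z => h z * u z * u z + h z * u1 z := by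
    filter_upwards [m] with y hy using d2 y hy
  have hh := h_deriv zero_mem
  have hu := u_deriv zero_mem
  rw [iteratedDeriv_succ, iteratedDeriv_succ, iteratedDeriv_one, d3.deriv_eq,
    (((hh.fun_mul hu).fun_mul hu).fun_add (hh.fun_mul u1_deriv)).deriv]
  have h0 : h 0 = 1 := by
    have : Gamma (1 / 2) ≠ 0 := (Gamma_pos_of_pos (by norm_num)).ne'
    simp only [h, zero_add, Gamma_one, one_mul]
    exact div_self this
  simp only [h0, u, u1]
  ring

lemma f_eq : f = dslope h 0 := by
  have h0 : h 0 = 1 := by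
    have : Gamma (1 / 2) ≠ 0 := (Gamma_pos_of_pos (by norm_num)).ne'
    simp only [h, zero_add, Gamma_one, one_mul]
    exact div_self this
  ext z
  by_cases hz : z = 0
  · subst hz
    rw [dslope_same, (h_deriv zero_mem).deriv, h0]
    simp [f, u]
  · rw [dslope_of_ne _ hz, slope_def_field, h0]
    simp only [f, hz, if_false, betaHalf, h]
    rw [Gamma_add_one hz]
    field_simp
    ring

lemma f_coeff : iteratedDeriv 2 f 0 / 2 = iteratedDeriv 3 h 0 / 6 := by
  have p1 := h_an.hasFPowerSeriesAt.has_fpower_series_dslope_fslope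
  have p2 := p1.analyticAt.hasFPowerSeriesAt
  have := p2.eq_formalMultilinearSeries p1
  have := congrArg (fun p => p.coeff 2) this
  simp only [FormalMultilinearSeries.coeff_fslope, FormalMultilinearSeries.coeff_ofScalars] at this
  rw [← f_eq] at this
  simpa [Nat.factorial] using this

end BetaAux

theorem laurent_coeff_beta_two :
    b 2 = 1 / 2 * iteratedDeriv 2 f 0 ∧
    b 2 = 2 * (riemannZeta 3).re + 4 / 3 * Real.log 2 ^ 3 - Real.pi ^ 2 / 3 * Real.log 2 := by
  have hb : b 2 = 1 / 2 * iteratedDeriv 2 f 0 := by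
    simp [b, Nat.factorial]
  refine ⟨hb, ?_⟩
  have h1 := BetaAux.f_coeff
  rw [BetaAux.h3, BetaAux.T_zero, BetaAux.Td_zero] at h1
  rw [hb]
  linear_combination h1
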